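/- Let V ⊆ ℂ^m and W ⊆ ℂ^n be nonempty connected open sets and let f : V × W → ℂ be a holomorphic (complex-differentiable) function such that: (1) for each point x ∈ V the function y ↦ f(x,y) is regular on W, and (2) for each point y ∈ W the function x ↦ f(x,y) is regular on V. Then f is regular on V × W, i.e., regular at every point of V × W with respect to complex polynomials in m + n variables. (Proposition 9.3 in the case of affine spaces.) -/

import Mathlib

open MvPolynomial

/-!
Write `f x = p x / q x` with polynomials `p x`, `q x` in `y`. For fixed `y`, regularity of `f · y`
provides a nonzero solution, supported on some finite set `S` of exponents, of the linear system
`b(x) p_x(y) = a(x) q_x(y)`, `x ∈ V`, for the coefficients of `a` and `b`. The maximal minors of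
these systems are polynomials in `y` and there are only countably many `S`, so by Baire's theorem
all the minors of some `S` vanish identically; cofactors then give a solution that is polynomial in
`y`, that is, an identity `b f = a` on `V × W` with polynomials `a` and `b ≠ 0` in all variables,
which may be taken relatively prime. If `b` had a zero `z` in `V × W`, then `a = b f` would vanish
at every zero of `b` near `z`. But restricting to lines of a fixed direction, and combining Bézout's
identity with the continuity of roots, shows that a polynomial with this property cannot be
relatively prime to `b`. Hence `b` has no zero in `V × W`, and `f = a / b`.
-/

open Filter Topology Set

section Regular

variable {𝕜 σ : Type*}

/-- Regular functions on a subset `U` of affine space: near each point of `U`, in the Zariski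
topology of `U`, the function is a quotient of polynomials. Only the values of `f` on `U` matter. -/
def IsRegularOn [Field 𝕜] (f : (σ → 𝕜) → 𝕜) (U : Set (σ → 𝕜)) : Prop :=
  ∀ x ∈ U, ∃ p q : MvPolynomial σ 𝕜, eval x q ≠ 0 ∧
    ∀ y ∈ U, eval y q ≠ 0 → f y = eval y p / eval y q

variable [NontriviallyNormedField 𝕜]

theorem eq_zero_of_eventually_eval_eq_zero {P : MvPolynomial σ 𝕜} {z : σ → 𝕜}
    (h : ∀ᶠ x in 𝓝 z, eval x P = 0) : P = 0 := by
  rw [Filter.Eventually, nhds_pi, Filter.mem_pi] at h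
  obtain ⟨I, -, t, ht, hsub⟩ := h
  refine funext_set t (fun i => infinite_of_mem_nhds (z i) (ht i)) fun x hx => ?_
  rw [map_zero]
  exact hsub fun i _ => hx i (mem_univ i)

theorem dense_setOf_eval_ne_zero {P : MvPolynomial σ 𝕜} (hP : P ≠ 0) :
    Dense {x | eval x P ≠ 0} := by
  intro z
  rw [mem_closure_iff_frequently]
  exact fun h => hP (eq_zero_of_eventually_eval_eq_zero (h.mono fun _ hx => not_not.1 hx))

theorem eq_zero_of_eval_mul_eq_zero {U : Set (σ → 𝕜)} (hU : IsOpen U) {φ : (σ → 𝕜) → 𝕜}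
    (hφ : ContinuousOn φ U) {Q : MvPolynomial σ 𝕜} (hQ : Q ≠ 0)
    (h : ∀ x ∈ U, eval x Q * φ x = 0) : ∀ x ∈ U, φ x = 0 := by
  intro x hx
  by_contra hne
  refine hQ (eq_zero_of_eventually_eval_eq_zero (z := x) ?_)
  filter_upwards [hU.mem_nhds hx, (hφ.continuousAt (hU.mem_nhds hx)).eventually_ne hne]
    with y hy hφy
  exact (mul_eq_zero.1 (h y hy)).resolve_right hφy

theorem IsRegularOn.continuousOn {f : (σ → 𝕜) → 𝕜} {U : Set (σ → 𝕜)} (hf : IsRegularOn f U) :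
    ContinuousOn f U := by
  intro x hx
  obtain ⟨p, q, hq, hfpq⟩ := hf x hx
  have hquot : ContinuousAt (fun y => eval y p / eval y q) x :=
    p.continuous_eval.continuousAt.div q.continuous_eval.continuousAt hq
  refine hquot.continuousWithinAt.congr_of_eventuallyEq ?_ (hfpq x hx hq)
  filter_upwards [self_mem_nhdsWithin,
    nhdsWithin_le_nhds (q.continuous_eval.continuousAt.eventually_ne hq)] with y hy hqy
  exact hfpq y hy hqy

theorem IsRegularOn.exists_eval_mul_eq {f : (σ → 𝕜) → 𝕜} {U : Set (σ → 𝕜)}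
    (hf : IsRegularOn f U) (hU : IsOpen U) (hne : U.Nonempty) :
    ∃ p q : MvPolynomial σ 𝕜, q ≠ 0 ∧ ∀ x ∈ U, eval x q * f x = eval x p := by
  obtain ⟨z, hz⟩ := hne
  obtain ⟨p, q, hqz, hfpq⟩ := hf z hz
  have hq : q ≠ 0 := by
    rintro rfl
    exact hqz (map_zero _)
  refine ⟨p, q, hq, fun x hx => sub_eq_zero.1 (eq_zero_of_eval_mul_eq_zero hU
    (φ := fun x => eval x q * f x - eval x p)
    ((q.continuous_eval.continuousOn.mul hf.continuousOn).sub p.continuous_eval.continuousOn)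
    hq (fun y hy => ?_) x hx)⟩
  rcases eq_or_ne (eval y q) 0 with hqy | hqy
  · rw [hqy, zero_mul]
  · rw [hfpq y hy hqy, mul_div_cancel₀ _ hqy, sub_self, mul_zero]

end Regular

section SeparateVariables

variable {𝕜 ι κ : Type*}

theorem eval_sumElim_eq_eval_eval_sumAlgEquiv [CommSemiring 𝕜] (x : ι → 𝕜) (y : κ → 𝕜)
    (P : MvPolynomial (ι ⊕ κ) 𝕜) :
    eval (Sum.elim x y) P = eval y (eval (C ∘ x) (sumAlgEquiv 𝕜 ι κ P)) := by
  have hom_eq : eval (Sum.elim x y) = (eval y).comp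
      ((eval (C ∘ x)).comp (sumAlgEquiv 𝕜 ι κ : MvPolynomial (ι ⊕ κ) 𝕜 →+* _)) := by
    refine ringHom_ext (fun r => ?_) ?_
    · simp
    · rintro (i | j) <;> simp
  exact DFunLike.congr_fun hom_eq P

variable [NontriviallyNormedField 𝕜] {V : Set (ι → 𝕜)} {W : Set (κ → 𝕜)}

theorem eq_zero_of_eval_sumElim_eq_zero (hV : IsOpen V) (hVne : V.Nonempty) (hW : IsOpen W)
    (hWne : W.Nonempty) {P : MvPolynomial (ι ⊕ κ) 𝕜}
    (h : ∀ x ∈ V, ∀ y ∈ W, eval (Sum.elim x y) P = 0) : P = 0 := by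
  obtain ⟨x₀, hx₀⟩ := hVne
  obtain ⟨y₀, hy₀⟩ := hWne
  have hfst : ∀ᶠ w in 𝓝 (Sum.elim x₀ y₀), w ∘ Sum.inl ∈ V :=
    (show Continuous fun w : ι ⊕ κ → 𝕜 => w ∘ Sum.inl by fun_prop).continuousAt (hV.mem_nhds hx₀)
  have hsnd : ∀ᶠ w in 𝓝 (Sum.elim x₀ y₀), w ∘ Sum.inr ∈ W :=
    (show Continuous fun w : ι ⊕ κ → 𝕜 => w ∘ Sum.inr by fun_prop).continuousAt (hW.mem_nhds hy₀)
  refine eq_zero_of_eventually_eval_eq_zero (z := Sum.elim x₀ y₀) ?_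
  filter_upwards [hfst, hsnd] with w hwV hwW
  rw [← Sum.elim_comp_inl_inr w]
  exact h _ hwV _ hwW

theorem eq_zero_of_eval_sumElim_mul_eq_zero (hV : IsOpen V) (hW : IsOpen W)
    {φ : (ι → 𝕜) → (κ → 𝕜) → 𝕜} (hφ₁ : ∀ x ∈ V, ContinuousOn (φ x) W)
    (hφ₂ : ∀ y ∈ W, ContinuousOn (φ · y) V) {Q : MvPolynomial (ι ⊕ κ) 𝕜} (hQ : Q ≠ 0)
    (h : ∀ x ∈ V, ∀ y ∈ W, eval (Sum.elim x y) Q * φ x y = 0) :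
    ∀ x ∈ V, ∀ y ∈ W, φ x y = 0 := by
  intro x₀ hx₀ y₀ hy₀
  by_contra hne
  have hopen : IsOpen (V ∩ (φ · y₀) ⁻¹' {0}ᶜ) :=
    (hφ₂ y₀ hy₀).isOpen_inter_preimage hV isOpen_compl_singleton
  refine hQ (eq_zero_of_eval_sumElim_eq_zero hopen ⟨x₀, hx₀, hne⟩ hW ⟨y₀, hy₀⟩ ?_)
  rintro x ⟨hx, hφx⟩ y -
  have hslice : eval (C ∘ x) (sumAlgEquiv 𝕜 ι κ Q) = 0 := by
    refine eq_zero_of_eventually_eval_eq_zero (z := y₀) ?_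
    filter_upwards [hW.mem_nhds hy₀,
      ((hφ₁ x hx).continuousAt (hW.mem_nhds hy₀)).eventually_ne hφx] with y' hy' hφy'
    rw [← eval_sumElim_eq_eval_eval_sumAlgEquiv]
    exact (mul_eq_zero.1 (h x hx y' hy')).resolve_right hφy'
  rw [eval_sumElim_eq_eval_eval_sumAlgEquiv, hslice, map_zero]

end SeparateVariables

section Elimination

theorem exists_forall_dotProduct_eq_zero_fin {R X : Type*} [CommRing R] [Nontrivial R] {k : ℕ}
    (g : X → Fin k → R) (h : ∀ r : Fin k → X, (Matrix.of (g ∘ r)).det = 0) :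
    ∃ c : Fin k → R, c ≠ 0 ∧ ∀ x, g x ⬝ᵥ c = 0 := by
  induction k with
  | zero => exact absurd (h Fin.elim0) (by simp)
  | succ k ih =>
    by_cases hminors : ∀ r : Fin k → X, (Matrix.of fun i => Fin.tail (g (r i))).det = 0
    · obtain ⟨c, hc, hgc⟩ := ih (fun x => Fin.tail (g x)) hminors
      refine ⟨Fin.cons 0 c, fun h0 => hc ?_, fun x => ?_⟩
      · exact funext fun i => congrFun h0 i.succ
      · simpa [dotProduct, Fin.sum_univ_succ, Fin.tail] using hgc x
    · push Not at hminors
      obtain ⟨r, hr⟩ := hminors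
      -- `c` consists of the cofactors of a row `g x` put on top of the rows `g (r i)`.
      refine ⟨fun j => (-1) ^ (j : ℕ) * (Matrix.of fun i => g (r i) ∘ j.succAbove).det,
        fun h0 => hr ?_, fun x => ?_⟩
      · simpa [Function.comp_def, Fin.tail_def] using congrFun h0 0
      · rw [← h (Fin.cons x r), Matrix.det_succ_row_zero]
        refine Finset.sum_congr rfl fun j _ => ?_
        have hminor : (Matrix.of (g ∘ (Fin.cons x r : Fin (k + 1) → X))).submatrix
            Fin.succ j.succAbove = Matrix.of fun i => g (r i) ∘ j.succAbove := by
          ext; simp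
        rw [hminor]
        simp only [Matrix.of_apply, Function.comp_apply, Fin.cons_zero]
        ring

theorem exists_forall_dotProduct_eq_zero {R X ν : Type*} [CommRing R] [Nontrivial R] [Fintype ν]
    [DecidableEq ν] (g : X → ν → R) (h : ∀ r : ν → X, (Matrix.of (g ∘ r)).det = 0) :
    ∃ c : ν → R, c ≠ 0 ∧ ∀ x, g x ⬝ᵥ c = 0 := by
  let e := Fintype.equivFin ν
  obtain ⟨c, hc, hgc⟩ := exists_forall_dotProduct_eq_zero_fin (fun x => g x ∘ e.symm)
    fun r => by
      rw [← Matrix.det_submatrix_equiv_self e]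
      simpa [Matrix.submatrix, Function.comp_def] using h (r ∘ e)
  refine ⟨c ∘ e, fun h0 => hc ?_, fun x => ?_⟩
  · exact funext fun i => by simpa using congrFun h0 (e.symm i)
  · rw [← hgc x, comp_equiv_symm_dotProduct]

variable {𝕜 κ : Type*} [NontriviallyNormedField 𝕜] [CompleteSpace 𝕜] [Countable κ]

theorem exists_mem_forall_eval_ne_zero {A : Type*} [Countable A] {W : Set (κ → 𝕜)} (hW : IsOpen W)
    (hWne : W.Nonempty) {P : A → MvPolynomial κ 𝕜} (hP : ∀ s, P s ≠ 0) :
    ∃ y ∈ W, ∀ s, eval y (P s) ≠ 0 := by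
  have hdense : Dense (⋂ s, {y | eval y (P s) ≠ 0}) := dense_iInter_of_isOpen
    (fun s => isOpen_ne_fun (P s).continuous_eval continuous_const)
    fun s => dense_setOf_eval_ne_zero (hP s)
  obtain ⟨y, hyW, hy⟩ := hdense.inter_open_nonempty W hW hWne
  exact ⟨y, hyW, mem_iInter.1 hy⟩

theorem exists_forall_dotProduct_eq_zero_of_eval {A X : Type*} [Countable A] {ν : A → Type*}
    [∀ s, Fintype (ν s)] {W : Set (κ → 𝕜)} (hW : IsOpen W) (hWne : W.Nonempty)
    (g : ∀ s, X → ν s → MvPolynomial κ 𝕜)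
    (h : ∀ y ∈ W, ∃ s, ∃ c : ν s → 𝕜, c ≠ 0 ∧ ∀ x, (eval y ∘ g s x) ⬝ᵥ c = 0) :
    ∃ s, ∃ c : ν s → MvPolynomial κ 𝕜, c ≠ 0 ∧ ∀ x, g s x ⬝ᵥ c = 0 := by
  classical
  by_contra hno
  have hminor : ∀ s, ∃ r : ν s → X, (Matrix.of (g s ∘ r)).det ≠ 0 := fun s => by
    by_contra! hall
    exact hno ⟨s, exists_forall_dotProduct_eq_zero (g s) hall⟩
  choose r hr using hminor
  obtain ⟨y, hy, hdet⟩ := exists_mem_forall_eval_ne_zero hW hWne hr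
  obtain ⟨s, c, hc, hgc⟩ := h y hy
  refine hdet s ?_
  rw [RingHom.map_det]
  exact Matrix.exists_mulVec_eq_zero_iff.1 ⟨c, hc, funext fun i => hgc (r s i)⟩

end Elimination

section GenericRelation

variable {R σ : Type*}

section Semiring

variable [CommSemiring R]

/-- The polynomial with coefficients `c`, supported on the finite set `S` of exponents. -/
noncomputable def ofCoeffs (S : Finset (σ →₀ ℕ)) (c : S → R) : MvPolynomial σ R :=
  ∑ α : S, monomial α.1 (c α)

theorem coeff_ofCoeffs {S : Finset (σ →₀ ℕ)} (c : S → R) (α : S) :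
    coeff α.1 (ofCoeffs S c) = c α := by
  classical
  simp [ofCoeffs, coeff_sum, coeff_monomial]

theorem ofCoeffs_coeff {S : Finset (σ →₀ ℕ)} {P : MvPolynomial σ R} (hS : P.support ⊆ S) :
    ofCoeffs S (fun α => coeff α.1 P) = P := by
  rw [ofCoeffs, Finset.sum_coe_sort S fun α => monomial α (coeff α P)]
  conv_rhs => rw [← support_sum_monomial_coeff P]
  refine (Finset.sum_subset hS fun α _ hα => ?_).symm
  rw [notMem_support_iff.1 hα, monomial_zero]

theorem eval_ofCoeffs {S : Finset (σ →₀ ℕ)} (c : S → R) (x : σ → R) :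
    eval x (ofCoeffs S c) = ∑ α : S, eval x (monomial α.1 1) * c α := by
  simp [ofCoeffs, eval_monomial, mul_comm]

end Semiring

variable [CommRing R]

/-- The equation `b(x) u = a(x) v`, as a row of coefficients for the unknown coefficients of
polynomials `b` (left summand) and `a` (right summand) supported on `S`. -/
noncomputable def relationRow (S : Finset (σ →₀ ℕ)) (x : σ → R) (u v : R) : S ⊕ S → R :=
  Sum.elim (fun α => eval x (monomial α.1 1) * u) fun α => -(eval x (monomial α.1 1) * v)

theorem relationRow_dotProduct {S : Finset (σ →₀ ℕ)} (x : σ → R) (u v : R) (c : S ⊕ S → R) :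
    relationRow S x u v ⬝ᵥ c =
      eval x (ofCoeffs S (c ∘ Sum.inl)) * u - eval x (ofCoeffs S (c ∘ Sum.inr)) * v := by
  simp only [dotProduct, relationRow, Fintype.sum_sum_type, Sum.elim_inl, Sum.elim_inr,
    eval_ofCoeffs, Finset.sum_mul, Function.comp_apply, sub_eq_add_neg, ← Finset.sum_neg_distrib]
  congr 1 <;> exact Finset.sum_congr rfl fun α _ => by ring

theorem map_comp_relationRow {R' : Type*} [CommRing R'] (φ : R →+* R') (S : Finset (σ →₀ ℕ))
    (x : σ → R) (u v : R) : φ ∘ relationRow S x u v = relationRow S (φ ∘ x) (φ u) (φ v) := by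
  funext α
  rcases α with α | α <;> simp [relationRow, eval_monomial, map_finsuppProd]

theorem exists_relation_of_forall_exists_relation {𝕜 ι κ : Type*} [NontriviallyNormedField 𝕜]
    [CompleteSpace 𝕜] [Countable ι] [Countable κ] {V : Set (ι → 𝕜)} {W : Set (κ → 𝕜)}
    (hW : IsOpen W) (hWne : W.Nonempty) (p q : V → MvPolynomial κ 𝕜)
    (h : ∀ y ∈ W, ∃ a b : MvPolynomial ι 𝕜, b ≠ 0 ∧
      ∀ x : V, eval x.1 b * eval y (p x) = eval x.1 a * eval y (q x)) :
    ∃ A B : MvPolynomial ι (MvPolynomial κ 𝕜), (A ≠ 0 ∨ B ≠ 0) ∧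
      ∀ x : V, eval (C ∘ x.1) B * p x = eval (C ∘ x.1) A * q x := by
  classical
  obtain ⟨S, c, hc, hrel⟩ := exists_forall_dotProduct_eq_zero_of_eval hW hWne
    (fun S (x : V) => relationRow S (C ∘ x.1) (p x) (q x)) fun y hy => by
      obtain ⟨a, b, hb, hab⟩ := h y hy
      obtain ⟨α, hα⟩ := ne_zero_iff.1 hb
      have hαS : α ∈ b.support ∪ a.support := Finset.mem_union_left _ (mem_support_iff.2 hα)
      refine ⟨b.support ∪ a.support, Sum.elim (fun α => coeff α.1 b) fun α => coeff α.1 a,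
        fun h0 => hα (congrFun h0 (Sum.inl ⟨α, hαS⟩)), fun x => ?_⟩
      have hCx : eval y ∘ C ∘ x.1 = x.1 := funext fun i => eval_C _
      rw [map_comp_relationRow, hCx, relationRow_dotProduct, Sum.elim_comp_inl, Sum.elim_comp_inr,
        ofCoeffs_coeff Finset.subset_union_left, ofCoeffs_coeff Finset.subset_union_right, hab,
        sub_self]
  refine ⟨ofCoeffs S (c ∘ Sum.inr), ofCoeffs S (c ∘ Sum.inl), ?_, fun x => ?_⟩
  · by_contra! h0
    refine hc (funext fun α => ?_)
    rcases α with α | α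
    · simpa [h0.2] using (coeff_ofCoeffs (c ∘ Sum.inl) α).symm
    · simpa [h0.1] using (coeff_ofCoeffs (c ∘ Sum.inr) α).symm
  · rw [← sub_eq_zero, ← relationRow_dotProduct, hrel]

end GenericRelation

section GlobalRationality

variable {𝕜 ι κ : Type*} [NontriviallyNormedField 𝕜] [CompleteSpace 𝕜] [Countable ι] [Countable κ]
  {V : Set (ι → 𝕜)} {W : Set (κ → 𝕜)} {f : (ι → 𝕜) → (κ → 𝕜) → 𝕜}

theorem exists_relation_of_separately_regular (hV : IsOpen V) (hVne : V.Nonempty) (hW : IsOpen W)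
    (hWne : W.Nonempty) (h₁ : ∀ x ∈ V, IsRegularOn (f x) W)
    (h₂ : ∀ y ∈ W, IsRegularOn (f · y) V) :
    ∃ A B : MvPolynomial (ι ⊕ κ) 𝕜, (A ≠ 0 ∨ B ≠ 0) ∧ ∀ x ∈ V, ∀ y ∈ W,
      eval (Sum.elim x y) B * f x y = eval (Sum.elim x y) A := by
  choose p q hq hqf using fun x : V => (h₁ x x.2).exists_eval_mul_eq hW hWne
  obtain ⟨A, B, hne, hrel⟩ := exists_relation_of_forall_exists_relation hW hWne p q fun y hy => by
    obtain ⟨a, b, hb, hbf⟩ := (h₂ y hy).exists_eval_mul_eq hV hVne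
    refine ⟨a, b, hb, fun x => ?_⟩
    rw [← hqf x y hy, ← hbf x x.2]
    ring
  let E := sumAlgEquiv 𝕜 ι κ
  refine ⟨E.symm A, E.symm B, by simpa using hne, fun x hx y hy => ?_⟩
  simp only [eval_sumElim_eq_eval_eval_sumAlgEquiv, E, AlgEquiv.apply_symm_apply]
  refine sub_eq_zero.1 (eq_zero_of_eval_mul_eq_zero hW
    (φ := fun y => eval y (eval (C ∘ x) B) * f x y - eval y (eval (C ∘ x) A))
    (((continuous_eval _).continuousOn.mul (h₁ x hx).continuousOn).sub
      (continuous_eval _).continuousOn) (hq ⟨x, hx⟩) (fun y' hy' => ?_) y hy)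
  have hxy := congrArg (eval y') (hrel ⟨x, hx⟩)
  simp only [map_mul, ← hqf ⟨x, hx⟩ y' hy'] at hxy
  linear_combination hxy

theorem exists_eval_mul_eq_of_separately_regular (hV : IsOpen V) (hVne : V.Nonempty)
    (hW : IsOpen W) (hWne : W.Nonempty) (h₁ : ∀ x ∈ V, IsRegularOn (f x) W)
    (h₂ : ∀ y ∈ W, IsRegularOn (f · y) V) :
    ∃ A B : MvPolynomial (ι ⊕ κ) 𝕜, B ≠ 0 ∧ ∀ x ∈ V, ∀ y ∈ W,
      eval (Sum.elim x y) B * f x y = eval (Sum.elim x y) A := by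
  obtain ⟨A, B, hne, hBf⟩ := exists_relation_of_separately_regular hV hVne hW hWne h₁ h₂
  refine ⟨A, B, ?_, hBf⟩
  rintro rfl
  refine hne.elim (fun hA => hA ?_) fun h0 => h0 rfl
  refine eq_zero_of_eval_sumElim_eq_zero hV hVne hW hWne fun x hx y hy => ?_
  rw [← hBf x hx y hy, map_zero, zero_mul]

theorem exists_isRelPrime_eval_mul_eq_of_separately_regular (hV : IsOpen V) (hVne : V.Nonempty)
    (hW : IsOpen W) (hWne : W.Nonempty) (h₁ : ∀ x ∈ V, IsRegularOn (f x) W)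
    (h₂ : ∀ y ∈ W, IsRegularOn (f · y) V) :
    ∃ a b : MvPolynomial (ι ⊕ κ) 𝕜, IsRelPrime a b ∧ b ≠ 0 ∧ ∀ x ∈ V, ∀ y ∈ W,
      eval (Sum.elim x y) b * f x y = eval (Sum.elim x y) a := by
  obtain ⟨A, B, hB, hBf⟩ := exists_eval_mul_eq_of_separately_regular hV hVne hW hWne h₁ h₂
  obtain ⟨a, b, c, hab, rfl, rfl⟩ := UniqueFactorizationMonoid.exists_reduced_factors' A B hB
  have hcont (P : MvPolynomial (ι ⊕ κ) 𝕜) :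
      Continuous fun z : (ι → 𝕜) × (κ → 𝕜) => eval (Sum.elim z.1 z.2) P :=
    P.continuous_eval.comp Homeomorph.sumArrowHomeomorphProdArrow.symm.continuous
  refine ⟨a, b, hab, right_ne_zero_of_mul hB, fun x hx y hy => sub_eq_zero.1 ?_⟩
  refine eq_zero_of_eval_sumElim_mul_eq_zero hV hW
    (φ := fun x y => eval (Sum.elim x y) b * f x y - eval (Sum.elim x y) a)
    (fun x hx => ?_) (fun y hy => ?_) (left_ne_zero_of_mul hB) (fun x hx y hy => ?_) x hx y hy
  · exact (((hcont b).comp (.prodMk_right x)).continuousOn.mul (h₁ x hx).continuousOn).sub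
      ((hcont a).comp (.prodMk_right x)).continuousOn
  · exact (((hcont b).comp (.prodMk_left y)).continuousOn.mul (h₂ y hy).continuousOn).sub
      ((hcont a).comp (.prodMk_left y)).continuousOn
  · have hxy := hBf x hx y hy
    simp only [map_mul] at hxy
    linear_combination hxy

end GlobalRationality

section LineRestriction

variable {R σ : Type*} [CommRing R]

/-- Restriction to the lines of direction `e`: the polynomial `b(x + T e)` in the variable `T`,
with coefficients polynomials in the base point `x`. -/
noncomputable def lineRestriction (e : σ → R) :
    MvPolynomial σ R →+* Polynomial (MvPolynomial σ R) :=
  eval₂Hom (Polynomial.C.comp C)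
    fun i => Polynomial.C (X i) + Polynomial.C (C (e i)) * Polynomial.X

theorem eval_map_lineRestriction (e x : σ → R) (s : R) (b : MvPolynomial σ R) :
    ((lineRestriction e b).map (eval x)).eval s = eval (x + s • e) b := by
  have hom_eq : ((Polynomial.evalRingHom s).comp (Polynomial.mapRingHom (eval x))).comp
      (lineRestriction e) = eval (x + s • e) := by
    refine ringHom_ext (fun r => ?_) fun i => ?_ <;>
      simp [lineRestriction, mul_comm (e _)]
  exact DFunLike.congr_fun hom_eq b

theorem natDegree_lineRestriction_ne_zero {b : MvPolynomial σ R}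
    {z e : σ → R} (h : eval (z + e) b ≠ eval z b) : (lineRestriction e b).natDegree ≠ 0 := by
  intro hdeg
  obtain ⟨c, hc⟩ := Polynomial.natDegree_eq_zero.1 hdeg
  have hconst (s : R) : eval (z + s • e) b = eval z c := by
    rw [← eval_map_lineRestriction, ← hc, Polynomial.map_C, Polynomial.eval_C]
  exact h (by simpa using (hconst 1).trans (hconst 0).symm)

/-- The automorphism `(x, T) ↦ (x + T e, T)` of affine space, acting on polynomials. Its
restriction to polynomials in `x` is `lineRestriction e`, and its inverse is `shear (-e)`. -/
noncomputable def shear (e : σ → R) :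
    Polynomial (MvPolynomial σ R) →+* Polynomial (MvPolynomial σ R) :=
  Polynomial.eval₂RingHom (lineRestriction e) Polynomial.X

theorem shear_C (e : σ → R) (b : MvPolynomial σ R) :
    shear e (Polynomial.C b) = lineRestriction e b :=
  Polynomial.eval₂_C _ _

theorem shear_neg_comp_shear (e : σ → R) : (shear (-e)).comp (shear e) = RingHom.id _ := by
  refine Polynomial.ringHom_ext' (ringHom_ext (fun r => ?_) fun i => ?_) ?_
  · simp [shear, lineRestriction]
  · simp only [shear, lineRestriction, RingHom.comp_apply, Polynomial.coe_eval₂RingHom,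
      Polynomial.eval₂_C, eval₂Hom_X', eval₂Hom_C, Polynomial.eval₂_add, Polynomial.eval₂_mul,
      Polynomial.eval₂_X, Pi.neg_apply, map_neg, RingHom.id_apply]
    ring
  · simp [shear]

theorem isRelPrime_C {A : Type*} [CommRing A] [IsDomain A] {a b : A} (hab : IsRelPrime a b)
    (hb : b ≠ 0) : IsRelPrime (Polynomial.C a) (Polynomial.C b) := by
  intro d hda hdb
  have hdeg : d.natDegree = 0 := by
    simpa using Polynomial.natDegree_le_of_dvd hdb (Polynomial.C_ne_zero.2 hb)
  obtain ⟨r, rfl⟩ := Polynomial.natDegree_eq_zero.1 hdeg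
  exact Polynomial.isUnit_C.2 (hab (by simpa using (Polynomial.C_dvd_iff_dvd_coeff _ _).1 hda 0)
    (by simpa using (Polynomial.C_dvd_iff_dvd_coeff _ _).1 hdb 0))

theorem isRelPrime_lineRestriction [IsDomain R] {a b : MvPolynomial σ R} (hab : IsRelPrime a b)
    (hb : b ≠ 0) (e : σ → R) : IsRelPrime (lineRestriction e a) (lineRestriction e b) := by
  have hinv (P) : shear (-e) (shear e P) = P := DFunLike.congr_fun (shear_neg_comp_shear e) P
  have hinv' (P) : shear e (shear (-e) P) = P := by
    simpa using DFunLike.congr_fun (shear_neg_comp_shear (-e)) P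
  intro d hda hdb
  rw [← shear_C] at hda hdb
  have hunit : IsUnit (shear (-e) d) := isRelPrime_C hab hb
    (by simpa [hinv] using map_dvd (shear (-e)) hda)
    (by simpa [hinv] using map_dvd (shear (-e)) hdb)
  simpa [hinv'] using hunit.map (shear e)

end LineRestriction

section Bezout

variable {R : Type*} [CommRing R] [IsDomain R] [UniqueFactorizationMonoid R]

theorem isCoprime_map_fractionRing_of_isRelPrime {P Q : Polynomial R} (hPQ : IsRelPrime P Q)
    (hQ : Q ≠ 0) : IsCoprime (P.map (algebraMap R (FractionRing R)))
      (Q.map (algebraMap R (FractionRing R))) := by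
  let := (inferInstance : Nonempty (NormalizedGCDMonoid R)).some
  refine IsRelPrime.isCoprime fun d hdP hdQ => ?_
  have hd : d ≠ 0 := ne_zero_of_dvd_ne_zero
    ((Polynomial.map_ne_zero_iff (IsFractionRing.injective R _)).2 hQ) hdQ
  let d₀ := (IsLocalization.integerNormalization (nonZeroDivisors R) d).primPart
  have hd₀ : d₀.map (algebraMap R (FractionRing R)) ∣ d := by
    obtain ⟨c, hc, hcd⟩ := IsLocalization.integerNormalization_spec (nonZeroDivisors R) d
    have hcK : IsUnit (algebraMap R (FractionRing R) c) := IsLocalization.map_units _ ⟨c, hc⟩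
    have hN := Polynomial.map_dvd (algebraMap R (FractionRing R))
      (IsLocalization.integerNormalization (nonZeroDivisors R) d).primPart_dvd
    rwa [hcd, algebra_compatible_smul (FractionRing R), Polynomial.smul_eq_C_mul,
      (hcK.map Polynomial.C).dvd_mul_left] at hN
  have hdvd {F : Polynomial R} (hdF : d ∣ F.map (algebraMap R (FractionRing R))) : d₀ ∣ F :=
    (Polynomial.isPrimitive_primPart _).dvd_of_fraction_map_dvd_fraction_map (hd₀.trans hdF)
  exact Polynomial.isUnit_or_eq_zero_of_isUnit_integerNormalization_primPart hd
    (hPQ (hdvd hdP) (hdvd hdQ))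

theorem exists_mul_add_mul_eq_C_of_isRelPrime {P Q : Polynomial R} (hPQ : IsRelPrime P Q)
    (hQ : Q.natDegree ≠ 0) : ∃ u v : Polynomial R, ∃ r : R, r ≠ 0 ∧
      P * u + Q * v = Polynomial.C r := by
  have hQ0 : Q ≠ 0 := by
    rintro rfl
    exact hQ Polynomial.natDegree_zero
  have hres : P.resultant Q ≠ 0 := by
    have hinj := IsFractionRing.injective R (FractionRing R)
    have := Polynomial.resultant_ne_zero _ _ (isCoprime_map_fractionRing_of_isRelPrime hPQ hQ0)
    rw [Polynomial.natDegree_map_eq_of_injective hinj,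
      Polynomial.natDegree_map_eq_of_injective hinj, Polynomial.resultant_map_map] at this
    exact fun h0 => this (by rw [h0, map_zero])
  obtain ⟨u, v, -, -, huv⟩ := Polynomial.exists_mul_add_mul_eq_C_resultant P Q le_rfl le_rfl
    (Or.inr hQ)
  exact ⟨u, v, _, hres, huv⟩

end Bezout

section Roots

theorem norm_eval_le_of_forall_le_norm_root {𝕜 : Type*} [NormedField 𝕜] {β : Polynomial 𝕜}
    (hβ : β.Splits) {ε : ℝ} (hε : 0 < ε) (h : ∀ s, β.eval s = 0 → ε ≤ ‖s‖) (t : 𝕜) :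
    ‖β.eval t‖ ≤ ‖β.eval 0‖ * (1 + ‖t‖ / ε) ^ β.natDegree := by
  have hfactor : ∀ r ∈ β.roots, ‖t - r‖ ≤ ‖0 - r‖ * (1 + ‖t‖ / ε) := fun r hr => by
    have hεr : 1 ≤ ‖r‖ / ε := (one_le_div hε).2 (h r (Polynomial.isRoot_of_mem_roots hr))
    calc ‖t - r‖ ≤ ‖t‖ + ‖r‖ := norm_sub_le t r
      _ ≤ ‖t‖ * (‖r‖ / ε) + ‖r‖ := by gcongr; exact le_mul_of_one_le_right (norm_nonneg t) hεr
      _ = ‖0 - r‖ * (1 + ‖t‖ / ε) := by rw [zero_sub, norm_neg]; ring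
  have hprod : (β.roots.map fun r => ‖t - r‖).prod ≤
      (β.roots.map fun r => ‖0 - r‖).prod * (1 + ‖t‖ / ε) ^ β.natDegree := by
    rw [hβ.natDegree_eq_card_roots, ← Multiset.prod_replicate, ← Multiset.map_const',
      ← Multiset.prod_map_mul]
    exact Multiset.prod_map_le_prod_map₀ _ _ (fun r _ => norm_nonneg _) hfactor
  have hnorm (s : 𝕜) : ‖β.eval s‖ = ‖β.leadingCoeff‖ * (β.roots.map fun r => ‖s - r‖).prod := by
    rw [hβ.eval_eq_prod_roots, norm_mul]
    simp only [← normHom_apply, map_multiset_prod, Multiset.map_map, Function.comp_def]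
  rw [hnorm t, hnorm 0, mul_assoc]
  gcongr

variable {𝕜 σ : Type*} [NontriviallyNormedField 𝕜] [IsAlgClosed 𝕜]

theorem eventually_exists_norm_lt_eval_add_smul_eq_zero {b : MvPolynomial σ 𝕜} {z e : σ → 𝕜}
    (hz : eval z b = 0) (he : eval (z + e) b ≠ 0) {ε : ℝ} (hε : 0 < ε) :
    ∀ᶠ x in 𝓝 z, ∃ s : 𝕜, ‖s‖ < ε ∧ eval (x + s • e) b = 0 := by
  let N := (lineRestriction e b).natDegree
  have hsmall : ∀ᶠ x in 𝓝 z, ‖eval x b‖ * (1 + 1 / ε) ^ N < ‖eval (x + e) b‖ := by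
    have hcont := b.continuous_eval
    refine ContinuousAt.eventually_lt (by fun_prop) (by fun_prop) ?_
    simpa [hz] using he
  filter_upwards [hsmall] with x hx
  by_contra! hroots
  let β := (lineRestriction e b).map (eval x)
  have heval (s : 𝕜) : β.eval s = eval (x + s • e) b := eval_map_lineRestriction e x s b
  have hbound := norm_eval_le_of_forall_le_norm_root (IsAlgClosed.splits β) hε
    (fun s hs => not_lt.1 fun hlt => hroots s hlt (heval s ▸ hs)) 1
  rw [heval, heval, one_smul, zero_smul, add_zero, norm_one] at hbound
  have hpow : (1 + 1 / ε) ^ β.natDegree ≤ (1 + 1 / ε) ^ N :=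
    pow_le_pow_right₀ (by simp [hε.le]) Polynomial.natDegree_map_le
  exact (hbound.trans (by gcongr)).not_gt hx

theorem frequently_eval_eq_zero_and_eval_ne_zero {a b : MvPolynomial σ 𝕜}
    (hab : IsRelPrime a b) (hb : b ≠ 0) {z : σ → 𝕜} (hz : eval z b = 0) :
    ∃ᶠ w in 𝓝 z, eval w b = 0 ∧ eval w a ≠ 0 := by
  obtain ⟨w₀, hw₀⟩ := (dense_setOf_eval_ne_zero hb).nonempty
  -- Bézout along the lines of direction `e` gives `a u + b v = r` with `r ≠ 0` depending only on
  -- the base point; if `a` vanished at the zeros of `b` near `z`, then `r` would vanish near `z`.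
  let e := w₀ - z
  have he : eval (z + e) b ≠ 0 := by rwa [add_sub_cancel]
  obtain ⟨u, v, r, hr, huv⟩ := exists_mul_add_mul_eq_C_of_isRelPrime
    (isRelPrime_lineRestriction hab hb e)
    (natDegree_lineRestriction_ne_zero (z := z) (by rwa [hz]))
  by_contra hvanish
  have hline : Tendsto (fun p : (σ → 𝕜) × 𝕜 => p.1 + p.2 • e) (𝓝 z ×ˢ 𝓝 0) (𝓝 z) := by
    rw [← nhds_prod_eq]
    exact Continuous.tendsto' (by fun_prop) _ _ (by simp)
  obtain ⟨near, hnear, small, hsmall, hnear_small⟩ :=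
    eventually_prod_iff.1 (hline.eventually (not_frequently.1 hvanish))
  obtain ⟨ε, hε, hball⟩ := Metric.eventually_nhds_iff.1 hsmall
  refine hr (eq_zero_of_eventually_eval_eq_zero (z := z) ?_)
  filter_upwards [hnear, eventually_exists_norm_lt_eval_add_smul_eq_zero hz he hε]
    with x hx ⟨s, hs, hbs⟩
  have has : eval (x + s • e) a = 0 :=
    not_not.1 fun has => hnear_small hx (hball (by rwa [dist_zero_right])) ⟨hbs, has⟩
  simpa [eval_map_lineRestriction, has, hbs] using
    (congrArg (fun P => (P.map (eval x)).eval s) huv).symm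

end Roots

theorem separately_regular_holomorphic_is_regular_complex_general {𝕜 ι κ : Type*}
    [NontriviallyNormedField 𝕜] [CompleteSpace 𝕜] [IsAlgClosed 𝕜] [Countable ι] [Countable κ]
    {V : Set (ι → 𝕜)} {W : Set (κ → 𝕜)} (hV : IsOpen V) (hW : IsOpen W)
    {f : (ι → 𝕜) → (κ → 𝕜) → 𝕜} (h₁ : ∀ x ∈ V, IsRegularOn (f x) W)
    (h₂ : ∀ y ∈ W, IsRegularOn (f · y) V) :
    IsRegularOn (fun w => f (w ∘ Sum.inl) (w ∘ Sum.inr))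
      {w | w ∘ Sum.inl ∈ V ∧ w ∘ Sum.inr ∈ W} := by
  intro z hz
  obtain ⟨a, b, hab, hb, hprod⟩ := exists_isRelPrime_eval_mul_eq_of_separately_regular
    hV ⟨_, hz.1⟩ hW ⟨_, hz.2⟩ h₁ h₂
  have hbf : ∀ w : ι ⊕ κ → 𝕜, w ∘ Sum.inl ∈ V ∧ w ∘ Sum.inr ∈ W →
      eval w b * f (w ∘ Sum.inl) (w ∘ Sum.inr) = eval w a := fun w hw => by
    simpa only [Sum.elim_comp_inl_inr] using hprod _ hw.1 _ hw.2
  have hopen : IsOpen {w : ι ⊕ κ → 𝕜 | w ∘ Sum.inl ∈ V ∧ w ∘ Sum.inr ∈ W} :=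
    (hV.prod hW).preimage Homeomorph.sumArrowHomeomorphProdArrow.continuous
  refine ⟨a, b, fun hbz => ?_, fun w hw hbw => ?_⟩
  · obtain ⟨w, ⟨hbw, haw⟩, hw⟩ := ((frequently_eval_eq_zero_and_eval_ne_zero hab hb
      hbz).and_eventually (hopen.mem_nhds hz)).exists
    exact haw (by rw [← hbf w hw, hbw, zero_mul])
  · rw [← hbf w hw, mul_div_cancel_left₀ _ hbw]

/-- **Proposition 9.3** (case of affine spaces). Let `V ⊆ ℂᵐ`, `W ⊆ ℂⁿ` be nonempty
connected open sets and `f : V × W → ℂ` a holomorphic function that is regular in each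
variable separately. Then `f` is regular on `V × W`. -/
theorem separately_regular_holomorphic_is_regular_complex
    (m n : ℕ) (V : Set (Fin m → ℂ)) (W : Set (Fin n → ℂ))
    (hVopen : IsOpen V) (hVne : V.Nonempty) (hVconn : IsConnected V)
    (hWopen : IsOpen W) (hWne : W.Nonempty) (hWconn : IsConnected W)
    (f : (Fin m → ℂ) × (Fin n → ℂ) → ℂ)
    (hf : DifferentiableOn ℂ f (V ×ˢ W))
    (h1 : ∀ x ∈ V, ∀ y ∈ W, ∃ p q : MvPolynomial (Fin n) ℂ, eval y q ≠ 0 ∧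
      ∀ y' ∈ W, eval y' q ≠ 0 → f (x, y') = eval y' p / eval y' q)
    (h2 : ∀ y ∈ W, ∀ x ∈ V, ∃ p q : MvPolynomial (Fin m) ℂ, eval x q ≠ 0 ∧
      ∀ x' ∈ V, eval x' q ≠ 0 → f (x', y) = eval x' p / eval x' q) :
    ∀ z ∈ V ×ˢ W, ∃ p q : MvPolynomial (Fin m ⊕ Fin n) ℂ,
      eval (Sum.elim z.1 z.2) q ≠ 0 ∧
      ∀ z' ∈ V ×ˢ W, eval (Sum.elim z'.1 z'.2) q ≠ 0 →
        f z' = eval (Sum.elim z'.1 z'.2) p / eval (Sum.elim z'.1 z'.2) q := by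
  intro z hz
  obtain ⟨p, q, hq, hpq⟩ := separately_regular_holomorphic_is_regular_complex_general
    hVopen hWopen (f := fun x y => f (x, y)) h1 h2 (Sum.elim z.1 z.2) hz
  exact ⟨p, q, hq, fun z' hz' => hpq (Sum.elim z'.1 z'.2) hz'⟩
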